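/- arXiv:2006.06283 — 5 statements merged into one kernel-verified Lean document; each statement's English description precedes it below -/
import Mathlib

section
/- Let 𝒜, ℰ : ℝ^{m×n} → ℝ^M be linear transformations, let r be a positive integer, let δ_r ∈ [0,1) be a restricted isometry constant of order r for 𝒜 (i.e. (1−δ_r)‖X‖_F² ≤ ‖𝒜(X)‖₂² ≤ (1+δ_r)‖X‖_F² for all X with rank(X) ≤ r), and suppose ‖ℰ‖_op^{(r)} ≤ ε^{(r)} ‖𝒜‖_op^{(r)} for some ε^{(r)} ≥ 0. Set δ̂_{r,max} = (1+δ_r)(1+ε^{(r)})² − 1 and 𝒜̂ = 𝒜 + ℰ. Then for every X ∈ ℝ^{m×n} with rank(X) ≤ r, (1 − δ̂_{r,max}) ‖X‖_F² ≤ ‖𝒜̂(X)‖₂² ≤ (1 + δ̂_{r,max}) ‖X‖_F². -/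
/-!
Write `f = ‖X‖_F`, `a = ‖A X‖`, `e = ‖E X‖`. The upper restricted isometry bound gives
`‖A‖_op^{(r)} ≤ √(1 + δ)`, so the hypothesis on `E` gives `e ≤ ε √(1 + δ) f`; this uses that the
supremum defining `‖E‖_op^{(r)}` is over a bounded set (`bddAbove_opNormR`), as every linear map
on a finite-dimensional space is bounded. The upper bound is then `(a + e)² ≤ (1 + δ)(1 + ε)² f²`.
For the lower bound, `‖A X + E X‖² ≥ (a - e)² ≥ a² - 2 a e ≥ (1 - δ - 2 ε (1 + δ)) f²`, which is
larger than `(2 - (1 + δ)(1 + ε)²) f²` by `ε² (1 + δ) f²`.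
-/

open scoped BigOperators
open Matrix

noncomputable def frobNorm {m n : ℕ} (X : Matrix (Fin m) (Fin n) ℝ) : ℝ :=
  Real.sqrt (Matrix.trace (Xᵀ * X))

/-- The rank-restricted operator norm `‖B‖_op^{(r)}`. -/
noncomputable def opNormR {m n M : ℕ}
    (B : Matrix (Fin m) (Fin n) ℝ →ₗ[ℝ] EuclideanSpace ℝ (Fin M)) (r : ℕ) : ℝ :=
  sSup {t : ℝ | ∃ X : Matrix (Fin m) (Fin n) ℝ, X ≠ 0 ∧ X.rank ≤ r ∧ t = ‖B X‖ / frobNorm X}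

theorem exists_norm_le_mul_norm {V W : Type*} [NormedAddCommGroup V] [NormedSpace ℝ V]
    [FiniteDimensional ℝ V] [NormedAddCommGroup W] [NormedSpace ℝ W] (B : V →ₗ[ℝ] W) :
    ∃ C : ℝ, ∀ x, ‖B x‖ ≤ C * ‖x‖ :=
  ⟨‖LinearMap.toContinuousLinearMap B‖, (LinearMap.toContinuousLinearMap B).le_opNorm⟩

section Frobenius

attribute [local instance] Matrix.frobeniusNormedAddCommGroup Matrix.frobeniusNormedSpace

theorem frobNorm_eq_norm {m n : ℕ} (X : Matrix (Fin m) (Fin n) ℝ) : frobNorm X = ‖X‖ := by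
  rw [frobNorm, Matrix.frobenius_norm_def, Real.sqrt_eq_rpow]
  congr 1
  simp only [Matrix.trace, Matrix.diag_apply, Matrix.mul_apply, Matrix.transpose_apply]
  rw [Finset.sum_comm]
  refine Finset.sum_congr rfl fun i _ => Finset.sum_congr rfl fun j _ => ?_
  rw [Real.rpow_two, Real.norm_eq_abs, sq_abs, sq]

theorem frobNorm_pos {m n : ℕ} {X : Matrix (Fin m) (Fin n) ℝ} (hX : X ≠ 0) : 0 < frobNorm X := by
  rw [frobNorm_eq_norm]
  exact norm_pos_iff.2 hX

theorem exists_norm_le_mul_frobNorm {m n M : ℕ}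
    (B : Matrix (Fin m) (Fin n) ℝ →ₗ[ℝ] EuclideanSpace ℝ (Fin M)) :
    ∃ C : ℝ, ∀ X, ‖B X‖ ≤ C * frobNorm X := by
  simp only [frobNorm_eq_norm]
  exact exists_norm_le_mul_norm B

end Frobenius

theorem bddAbove_opNormR {m n M : ℕ}
    (B : Matrix (Fin m) (Fin n) ℝ →ₗ[ℝ] EuclideanSpace ℝ (Fin M)) (r : ℕ) :
    BddAbove {t : ℝ | ∃ X : Matrix (Fin m) (Fin n) ℝ,
      X ≠ 0 ∧ X.rank ≤ r ∧ t = ‖B X‖ / frobNorm X} := by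
  obtain ⟨C, hC⟩ := exists_norm_le_mul_frobNorm B
  refine ⟨C, ?_⟩
  rintro t ⟨X, hX, -, rfl⟩
  exact (div_le_iff₀ (frobNorm_pos hX)).2 (hC X)

theorem norm_le_opNormR_mul {m n M : ℕ}
    (B : Matrix (Fin m) (Fin n) ℝ →ₗ[ℝ] EuclideanSpace ℝ (Fin M)) {r : ℕ}
    {X : Matrix (Fin m) (Fin n) ℝ} (hX : X.rank ≤ r) :
    ‖B X‖ ≤ opNormR B r * frobNorm X := by
  rcases eq_or_ne X 0 with rfl | h0
  · simp [frobNorm]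
  · exact (div_le_iff₀ (frobNorm_pos h0)).1 (le_csSup (bddAbove_opNormR B r) ⟨X, h0, hX, rfl⟩)

theorem rip_for_perturbed_transformation
    (m n M r : ℕ)
    (A E : Matrix (Fin m) (Fin n) ℝ →ₗ[ℝ] EuclideanSpace ℝ (Fin M))
    (δr εr : ℝ) (hδ0 : 0 ≤ δr) (hδ1 : δr < 1) (hεr : 0 ≤ εr)
    (hRIP : ∀ X : Matrix (Fin m) (Fin n) ℝ, X.rank ≤ r →
      (1 - δr) * frobNorm X ^ 2 ≤ ‖A X‖ ^ 2 ∧ ‖A X‖ ^ 2 ≤ (1 + δr) * frobNorm X ^ 2)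
    (hE : opNormR E r ≤ εr * opNormR A r) :
    ∀ X : Matrix (Fin m) (Fin n) ℝ, X.rank ≤ r →
      (1 - ((1 + δr) * (1 + εr) ^ 2 - 1)) * frobNorm X ^ 2 ≤ ‖(A + E) X‖ ^ 2 ∧
        ‖(A + E) X‖ ^ 2 ≤ (1 + ((1 + δr) * (1 + εr) ^ 2 - 1)) * frobNorm X ^ 2 := by
  have hf0 : ∀ X : Matrix (Fin m) (Fin n) ℝ, 0 ≤ frobNorm X := fun X => Real.sqrt_nonneg _
  set s := Real.sqrt (1 + δr) with hs
  have hs0 : 0 ≤ s := Real.sqrt_nonneg _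
  have hss : s ^ 2 = 1 + δr := Real.sq_sqrt (by linarith)
  have hA : ∀ X : Matrix (Fin m) (Fin n) ℝ, X.rank ≤ r → ‖A X‖ ≤ s * frobNorm X := by
    intro X hX
    refine (pow_le_pow_iff_left₀ (norm_nonneg _) (mul_nonneg hs0 (hf0 X)) two_ne_zero).1 ?_
    rw [mul_pow, hss]
    exact (hRIP X hX).2
  -- `Real.sSup_le` also covers the empty set (`r = 0` or an empty matrix), where `sSup ∅ = 0`.
  have hAop : opNormR A r ≤ s := by
    refine Real.sSup_le ?_ hs0
    rintro t ⟨X, h0, hX, rfl⟩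
    exact (div_le_iff₀ (frobNorm_pos h0)).2 (hA X hX)
  intro X hX
  have hf := hf0 X
  have ha := hA X hX
  have he : ‖E X‖ ≤ εr * s * frobNorm X :=
    (norm_le_opNormR_mul E hX).trans <| mul_le_mul_of_nonneg_right
      (hE.trans (mul_le_mul_of_nonneg_left hAop hεr)) hf
  have hlow := (hRIP X hX).1
  have ha0 := norm_nonneg (A X)
  have he0 := norm_nonneg (E X)
  rw [LinearMap.add_apply]
  constructor
  · have hsq : (‖A X‖ - ‖E X‖) ^ 2 ≤ ‖A X + E X‖ ^ 2 := by
      refine sq_le_sq.2 ?_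
      rw [abs_of_nonneg (norm_nonneg (A X + E X))]
      simpa using abs_norm_sub_norm_le (A X) (-E X)
    have hae : ‖A X‖ * ‖E X‖ ≤ εr * (1 + δr) * frobNorm X ^ 2 := by
      calc ‖A X‖ * ‖E X‖ ≤ (s * frobNorm X) * (εr * s * frobNorm X) :=
            mul_le_mul ha he he0 (mul_nonneg hs0 hf)
        _ = εr * s ^ 2 * frobNorm X ^ 2 := by ring
        _ = _ := by rw [hss]
    have hgap : 0 ≤ εr ^ 2 * (1 + δr) * frobNorm X ^ 2 := by positivity
    nlinarith [sq_nonneg ‖E X‖]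
  · calc ‖A X + E X‖ ^ 2 ≤ (s * frobNorm X + εr * s * frobNorm X) ^ 2 :=
          pow_le_pow_left₀ (norm_nonneg _) ((norm_add_le _ _).trans (add_le_add ha he)) 2
      _ = s ^ 2 * (1 + εr) ^ 2 * frobNorm X ^ 2 := by ring
      _ = _ := by rw [hss]; ring
end

section
/- Let X, Y ∈ ℝ^{m×n} satisfy XᵀY = 0 and XYᵀ = 0, and let 0 < p ≤ 1. Then ‖X + Y‖_p^p = ‖X‖_p^p + ‖Y‖_p^p. -/
/-!
Put `A = X Xᵀ` and `B = Y Yᵀ`. The orthogonality hypotheses give `A * B = 0` and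
`(X + Y)(X + Y)ᵀ = A + B`. Over the polynomial ring, `A * B = 0` yields
`(t - A)(t - B) = t (t - (A + B))`, so taking determinants
`χ_A χ_B = t ^ m χ_{A + B}`. Comparing roots, the eigenvalues of `A` together with those of `B`
are those of `A + B` together with `m` extra zeros. Summing `x ↦ (√x) ^ p` over both multisets
gives the claim, as this function vanishes at `0` when `p ≠ 0`.
-/

open scoped BigOperators
open Matrix

noncomputable def singVals {m n : ℕ} (X : Matrix (Fin m) (Fin n) ℝ) : Fin m → ℝ :=
  fun i => Real.sqrt ((Matrix.isHermitian_mul_conjTranspose_self X).eigenvalues i)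

/-- The `p`-th power of the Schatten `p` quasi-norm: `‖X‖_p^p = ∑ σᵢ(X)^p`. -/
noncomputable def schattenPP {m n : ℕ} (p : ℝ) (X : Matrix (Fin m) (Fin n) ℝ) : ℝ :=
  ∑ i, (singVals X i) ^ p

open Polynomial in
lemma charpoly_mul_charpoly_of_mul_eq_zero {R : Type*} [CommRing R] {m : ℕ}
    {A B : Matrix (Fin m) (Fin m) R} (h : A * B = 0) :
    A.charpoly * B.charpoly = X ^ m * (A + B).charpoly := by
  have key : A.charmatrix * B.charmatrix = (X : R[X]) • (A + B).charmatrix := by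
    have hC : C.mapMatrix A * C.mapMatrix B = 0 := by
      rw [← map_mul, h, map_zero]
    simp only [charmatrix, map_add, Matrix.scalar_apply,
      ← Matrix.smul_one_eq_diagonal, sub_mul, mul_sub, hC, smul_mul_assoc, mul_smul_comm,
      one_mul, mul_one, smul_sub, smul_add]
    abel
  have hdet := congrArg Matrix.det key
  rwa [Matrix.det_mul, Matrix.det_smul, Fintype.card_fin] at hdet

/-- Hermitian matrices with `A * B = 0` have eigenvalue sums that add up, for any summand
vanishing at `0`. The matrix `S` stands for `A + B`, which lets each Hermitian proof be supplied in
whatever form it arises. -/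
lemma sum_eigenvalues_add_of_mul_eq_zero {m : ℕ} {A B S : Matrix (Fin m) (Fin m) ℝ}
    (hA : A.IsHermitian) (hB : B.IsHermitian) (hS : S.IsHermitian) (hadd : S = A + B)
    (h : A * B = 0) (f : ℝ → ℝ) (hf : f 0 = 0) :
    ∑ i, f (hS.eigenvalues i) = ∑ i, f (hA.eigenvalues i) + ∑ i, f (hB.eigenvalues i) := by
  have hpoly := charpoly_mul_charpoly_of_mul_eq_zero h
  rw [← hadd] at hpoly
  have hroots := congrArg Polynomial.roots hpoly
  rw [Polynomial.roots_mul (mul_ne_zero A.charpoly_monic.ne_zero B.charpoly_monic.ne_zero),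
    Polynomial.roots_mul (mul_ne_zero (pow_ne_zero _ Polynomial.X_ne_zero)
      S.charpoly_monic.ne_zero),
    Polynomial.roots_X_pow, hA.roots_charpoly_eq_eigenvalues, hB.roots_charpoly_eq_eigenvalues,
    hS.roots_charpoly_eq_eigenvalues] at hroots
  have hsum := congrArg (fun s : Multiset ℝ => (s.map f).sum) hroots
  simpa [Multiset.map_nsmul, Multiset.sum_nsmul, hf, Function.comp_def, List.sum_ofFn] using hsum.symm

theorem schatten_p_power_additive_of_orthogonal
    (m n : ℕ) (hmn : m ≤ n) (p : ℝ) (hp : 0 < p) (hp1 : p ≤ 1)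
    (X Y : Matrix (Fin m) (Fin n) ℝ)
    (h1 : Xᵀ * Y = 0) (h2 : X * Yᵀ = 0) :
    schattenPP p (X + Y) = schattenPP p X + schattenPP p Y := by
  have h2' : Y * Xᵀ = 0 := by
    simpa using congrArg Matrix.transpose h2
  refine sum_eigenvalues_add_of_mul_eq_zero
    (Matrix.isHermitian_mul_conjTranspose_self X) (Matrix.isHermitian_mul_conjTranspose_self Y)
    (Matrix.isHermitian_mul_conjTranspose_self (X + Y)) ?_ ?_ (fun x => Real.sqrt x ^ p) ?_
  · simp [Matrix.conjTranspose_eq_transpose_of_trivial, Matrix.transpose_add, Matrix.add_mul, Matrix.mul_add,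
      h2, h2']
  · rw [Matrix.conjTranspose_eq_transpose_of_trivial, Matrix.mul_assoc, ← Matrix.mul_assoc Xᵀ,
      h1, Matrix.zero_mul, Matrix.mul_zero]
  · simp [Real.zero_rpow hp.ne']
end

section
/- Let 0 < p ≤ 1, let r and N be positive integers, and let v ∈ ℝ^d be a vector with nonnegative entries arranged in nonincreasing order: v₁ ≥ v₂ ≥ … ≥ v_d ≥ 0. Partition the indices {r+1, …, d} into consecutive blocks T₁, T₂, …, T_J of size N (except possibly the last). Then Σ_{i≥2} (Σ_{l∈T_i} v_l²)^{p/2} ≤ N^{p/2−1} Σ_{j=r+1}^{d} v_j^p; consequently, (Σ_{i≥2} Σ_{l∈T_i} v_l²)^{p/2} ≤ N^{p/2−1} Σ_{j=r+1}^{d} v_j^p. -/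
/-!
Every entry of a block `T_i` with `i ≥ 2` is at most its leading entry `M`, so
`(∑_{T_i} v²)^{p/2} ≤ (N M²)^{p/2} = N^{p/2-1} · N M^p`. The preceding block `T_{i-1}` is full and all
its entries are at least `M`, so `N M^p ≤ ∑_{T_{i-1}} v^p`. Summing over `i` telescopes into the tail
sum (`sum_blocks_le`). The second estimate follows from the first and the subadditivity of
`t ↦ t^{p/2}` on nonnegative reals (`rpow_sum_le_sum_rpow_of_le_one`).

The block argument is carried out for the extension of `v` by zero to all of `ℕ`, which is still
nonnegative and nonincreasing; this makes every block have exactly `N` elements.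
-/

open scoped BigOperators
open Matrix

/-- Extension of a finite vector by zero to a sequence indexed by `ℕ`. -/
noncomputable def zeroExtend {d : ℕ} (v : Fin d → ℝ) (n : ℕ) : ℝ :=
  if h : n < d then v ⟨n, h⟩ else 0

lemma zeroExtend_nonneg {d : ℕ} {v : Fin d → ℝ} (hv : ∀ i, 0 ≤ v i) (n : ℕ) :
    0 ≤ zeroExtend v n := by
  unfold zeroExtend
  split_ifs
  · exact hv _
  · exact le_rfl

lemma zeroExtend_antitone {d : ℕ} {v : Fin d → ℝ} (hv : ∀ i, 0 ≤ v i)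
    (hmono : ∀ i j : Fin d, i ≤ j → v j ≤ v i) : Antitone (zeroExtend v) := by
  intro m n hmn
  by_cases hn : n < d
  · have hm : m < d := lt_of_le_of_lt hmn hn
    simp only [zeroExtend, hn, hm, dif_pos]
    exact hmono _ _ hmn
  · have h0 : zeroExtend v n = 0 := by simp [zeroExtend, hn]
    rw [h0]
    exact zeroExtend_nonneg hv m

lemma sum_filter_eq_sum_Ico {d : ℕ} (v : Fin d → ℝ) (g : ℝ → ℝ) (hg : g 0 = 0) (a b : ℕ) :
    ∑ l ∈ Finset.univ.filter (fun l : Fin d => a ≤ (l : ℕ) ∧ (l : ℕ) < b), g (v l)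
      = ∑ n ∈ Finset.Ico a b, g (zeroExtend v n) := by
  refine Finset.sum_of_injOn (fun l : Fin d => (l : ℕ)) ?_ ?_ ?_ ?_
  · intro x _ y _ h
    exact Fin.ext h
  · intro x hx
    simpa using hx
  · intro n hn hn'
    have h : ¬ n < d := by
      intro h
      exact hn' ⟨⟨n, h⟩, by simpa using hn, rfl⟩
    simp [zeroExtend, h, hg]
  · intro l _
    simp [zeroExtend]

/-- The `ℓ₂` norm of a block is controlled by the `ℓ_p` quasi-norm of the preceding block. -/
lemma block_le_prev_block {w : ℕ → ℝ} (hw : ∀ n, 0 ≤ w n) (hanti : Antitone w) {N : ℕ} (hN : 0 < N)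
    {p : ℝ} (hp : 0 < p) (a : ℕ) :
    (∑ n ∈ Finset.Ico (a + N) (a + N + N), w n ^ 2) ^ (p / 2)
      ≤ (N : ℝ) ^ (p / 2 - 1) * ∑ n ∈ Finset.Ico a (a + N), w n ^ p := by
  have hN' : (0 : ℝ) < N := by exact_mod_cast hN
  have hM := hw (a + N)
  have h1 : ∑ n ∈ Finset.Ico (a + N) (a + N + N), w n ^ 2 ≤ N * w (a + N) ^ 2 := by
    have := Finset.sum_le_card_nsmul (Finset.Ico (a + N) (a + N + N)) (fun n => w n ^ 2)
      (w (a + N) ^ 2) (fun n hn => pow_le_pow_left₀ (hw n) (hanti (Finset.mem_Ico.1 hn).1) 2)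
    simpa using this
  have h2 : N * w (a + N) ^ p ≤ ∑ n ∈ Finset.Ico a (a + N), w n ^ p := by
    have := Finset.card_nsmul_le_sum (Finset.Ico a (a + N)) (fun n => w n ^ p)
      (w (a + N) ^ p)
      (fun n hn => Real.rpow_le_rpow hM (hanti (Finset.mem_Ico.1 hn).2.le) hp.le)
    simpa using this
  calc (∑ n ∈ Finset.Ico (a + N) (a + N + N), w n ^ 2) ^ (p / 2)
      ≤ (N * w (a + N) ^ 2) ^ (p / 2) :=
        Real.rpow_le_rpow (Finset.sum_nonneg fun n _ => sq_nonneg _) h1 (by positivity)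
    _ = (N : ℝ) ^ (p / 2 - 1) * (N * w (a + N) ^ p) := by
        rw [Real.mul_rpow hN'.le (sq_nonneg _), ← Real.rpow_natCast (w (a + N)) 2,
          ← Real.rpow_mul hM, Real.rpow_sub_one hN'.ne']
        have : ((2 : ℕ) : ℝ) * (p / 2) = p := by push_cast; ring
        rw [this]
        field_simp
    _ ≤ _ := mul_le_mul_of_nonneg_left h2 (by positivity)

lemma sum_blocks_le {w : ℕ → ℝ} (hw : ∀ n, 0 ≤ w n) (hanti : Antitone w) {N : ℕ} (hN : 0 < N)
    {p : ℝ} (hp : 0 < p) (r k : ℕ) :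
    ∑ i ∈ Finset.Icc 2 (k + 1),
        (∑ n ∈ Finset.Ico (r + (i - 1) * N) (r + i * N), w n ^ 2) ^ (p / 2)
      ≤ (N : ℝ) ^ (p / 2 - 1) * ∑ n ∈ Finset.Ico r (r + k * N), w n ^ p := by
  induction k with
  | zero => simp
  | succ k ih =>
    have hb := block_le_prev_block hw hanti hN hp (r + k * N)
    have e1 : r + (k + 1 + 1 - 1) * N = r + k * N + N := by
      rw [Nat.add_sub_cancel]; ring
    have e2 : r + (k + 1 + 1) * N = r + k * N + N + N := by ring
    have e3 : r + (k + 1) * N = r + k * N + N := by ring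
    rw [Finset.sum_Icc_succ_top (by omega), e1, e2, e3,
      ← Finset.sum_Ico_consecutive _ (Nat.le_add_right r (k * N))
        (Nat.le_add_right (r + k * N) N), mul_add]
    exact add_le_add ih hb

lemma rpow_sum_le_sum_rpow_of_le_one {ι : Type*} (s : Finset ι) (f : ι → ℝ) (hf : ∀ i, 0 ≤ f i) {q : ℝ}
    (hq : 0 < q) (hq1 : q ≤ 1) : (∑ i ∈ s, f i) ^ q ≤ ∑ i ∈ s, f i ^ q := by
  classical
  induction s using Finset.induction_on with
  | empty => simp [Real.zero_rpow hq.ne']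
  | insert a s ha ih =>
    rw [Finset.sum_insert ha, Finset.sum_insert ha]
    exact (Real.rpow_add_le_add_rpow (hf a) (Finset.sum_nonneg fun i _ => hf i) hq.le hq1).trans
      (add_le_add le_rfl ih)

theorem sorted_blocks_l2_lp_estimate
    (d r N : ℕ) (hr : 0 < r) (hN : 0 < N) (p : ℝ) (hp : 0 < p) (hp1 : p ≤ 1)
    (v : Fin d → ℝ) (hnonneg : ∀ i, 0 ≤ v i)
    (hmono : ∀ i j : Fin d, i ≤ j → v j ≤ v i) :
    (∑ i ∈ Finset.Icc 2 d,
        (∑ l ∈ Finset.univ.filter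
            (fun l : Fin d => r + (i - 1) * N ≤ (l : ℕ) ∧ (l : ℕ) < r + i * N),
          v l ^ 2) ^ (p / 2))
      ≤ (N : ℝ) ^ (p / 2 - 1) *
        ∑ j ∈ Finset.univ.filter (fun j : Fin d => r ≤ (j : ℕ)), v j ^ p ∧
    (∑ i ∈ Finset.Icc 2 d,
        ∑ l ∈ Finset.univ.filter
            (fun l : Fin d => r + (i - 1) * N ≤ (l : ℕ) ∧ (l : ℕ) < r + i * N),
          v l ^ 2) ^ (p / 2)
      ≤ (N : ℝ) ^ (p / 2 - 1) *
        ∑ j ∈ Finset.univ.filter (fun j : Fin d => r ≤ (j : ℕ)), v j ^ p := by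
  have hw := zeroExtend_nonneg hnonneg
  have hanti := zeroExtend_antitone hnonneg hmono
  have first : (∑ i ∈ Finset.Icc 2 d,
        (∑ l ∈ Finset.univ.filter
            (fun l : Fin d => r + (i - 1) * N ≤ (l : ℕ) ∧ (l : ℕ) < r + i * N),
          v l ^ 2) ^ (p / 2))
      ≤ (N : ℝ) ^ (p / 2 - 1) *
        ∑ j ∈ Finset.univ.filter (fun j : Fin d => r ≤ (j : ℕ)), v j ^ p := by
    simp_rw [sum_filter_eq_sum_Ico v (fun x => x ^ 2) (by simp)]
    calc _ ≤ ∑ i ∈ Finset.Icc 2 (d + 1),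
          (∑ n ∈ Finset.Ico (r + (i - 1) * N) (r + i * N), zeroExtend v n ^ 2) ^ (p / 2) := by
          refine Finset.sum_le_sum_of_subset_of_nonneg
            (Finset.Icc_subset_Icc_right (Nat.le_succ d)) fun i _ _ => ?_
          exact Real.rpow_nonneg (Finset.sum_nonneg fun n _ => sq_nonneg _) _
      _ ≤ _ := sum_blocks_le hw hanti hN hp r d
      _ ≤ _ := by
          refine mul_le_mul_of_nonneg_left ?_ (by positivity)
          rw [← sum_filter_eq_sum_Ico v (fun x => x ^ p) (Real.zero_rpow hp.ne')]
          refine Finset.sum_le_sum_of_subset_of_nonneg ?_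
            fun j _ _ => Real.rpow_nonneg (hnonneg j) p
          exact Finset.monotone_filter_right _ fun j _ hj => hj.1
  refine ⟨first, le_trans ?_ first⟩
  exact rpow_sum_le_sum_rpow_of_le_one _ _ (fun i => Finset.sum_nonneg fun l _ => sq_nonneg _)
    (by positivity) (by linarith)
end

section
/- Let 0 < p ≤ 1, let x, x̂ ∈ ℝ^d satisfy Σᵢ |x̂ᵢ|^p ≤ Σᵢ |xᵢ|^p, let h = x − x̂, and let S ⊆ {1,…,d} be a set of r indices containing r largest-magnitude entries of x (i.e. |xᵢ| ≥ |xⱼ| for all i ∈ S, j ∉ S). Then Σ_{i∉S} |hᵢ|^p ≤ Σ_{i∈S} |hᵢ|^p + 2 Σ_{i∉S} |xᵢ|^p. -/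
/-!
Since `t ↦ t ^ p` is subadditive on `[0, ∞)` for `0 < p ≤ 1`, the map `t ↦ |t| ^ p` satisfies the
triangle inequality (`abs_add_rpow_le`). With `h = x - xh`, this gives
`|h i| ^ p ≤ |x i| ^ p + |xh i| ^ p` off `S` and `|x i| ^ p ≤ |h i| ^ p + |xh i| ^ p` on `S`.
Summing both and bounding the total of `|xh i| ^ p` by that of `|x i| ^ p`, the sums of
`|x i| ^ p` over `S` cancel and the one over `Sᶜ` appears twice.
-/

open scoped BigOperators
open Matrix

lemma abs_add_rpow_le {p : ℝ} (hp : 0 < p) (hp1 : p ≤ 1) (a b : ℝ) :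
    |a + b| ^ p ≤ |a| ^ p + |b| ^ p :=
  (Real.rpow_le_rpow (abs_nonneg _) (abs_add_le a b) hp.le).trans
    (Real.rpow_add_le_add_rpow (abs_nonneg a) (abs_nonneg b) hp.le hp1)

theorem lp_cone_constraint
    (d r : ℕ) (p : ℝ) (hp : 0 < p) (hp1 : p ≤ 1)
    (x xh : Fin d → ℝ)
    (hmin : ∑ i, |xh i| ^ p ≤ ∑ i, |x i| ^ p)
    (S : Finset (Fin d)) (hcard : S.card = r)
    (hlargest : ∀ i ∈ S, ∀ j, j ∉ S → |x j| ≤ |x i|) :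
    ∑ i ∈ Sᶜ, |x i - xh i| ^ p ≤
      ∑ i ∈ S, |x i - xh i| ^ p + 2 * ∑ i ∈ Sᶜ, |x i| ^ p := by
  have hoff : ∑ i ∈ Sᶜ, |x i - xh i| ^ p ≤ ∑ i ∈ Sᶜ, |x i| ^ p + ∑ i ∈ Sᶜ, |xh i| ^ p := by
    rw [← Finset.sum_add_distrib]
    refine Finset.sum_le_sum fun i _ => ?_
    simpa [sub_eq_add_neg] using abs_add_rpow_le hp hp1 (x i) (-xh i)
  have hon : ∑ i ∈ S, |x i| ^ p ≤ ∑ i ∈ S, |x i - xh i| ^ p + ∑ i ∈ S, |xh i| ^ p := by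
    rw [← Finset.sum_add_distrib]
    refine Finset.sum_le_sum fun i _ => ?_
    simpa using abs_add_rpow_le hp hp1 (x i - xh i) (xh i)
  rw [← Finset.sum_add_sum_compl S, ← Finset.sum_add_sum_compl S (fun i => |x i| ^ p)] at hmin
  linarith
end

section
/- Let a > 1, 0 < p < 1, and let δ₁, δ₂ be real numbers with 0 ≤ δ₁ ≤ δ₂ and δ₂ < 1/(1 + √2·a^{1/2−1/p}). Then a^{p/2−1} (δ₁² + δ₂²)^{p/2} < (1 − δ₁)^p. -/
open scoped BigOperators
open Matrix

/-! With `t = a ^ (1/2 - 1/p)`, the left-hand side is the `p`-th power of `t * √(δ1² + δ2²)`.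
Since `√(δ1² + δ2²) ≤ √2 * δ2`, and the hypothesis on `δ2` reads `√2 * t * δ2 < 1 - δ2 ≤ 1 - δ1`,
the claim follows from strict monotonicity of `x ↦ x ^ p` on the nonnegative reals. -/

theorem ric_condition_algebraic_consequence
    (a p δ1 δ2 : ℝ) (ha : 1 < a) (hp : 0 < p) (hp1 : p < 1)
    (h1 : 0 ≤ δ1) (h12 : δ1 ≤ δ2)
    (h2 : δ2 < 1 / (1 + Real.sqrt 2 * a ^ ((1 : ℝ) / 2 - 1 / p))) :
    a ^ (p / 2 - 1) * (δ1 ^ 2 + δ2 ^ 2) ^ (p / 2) < (1 - δ1) ^ p := by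
  have ha0 : 0 < a := by linarith
  have hpow : a ^ (p / 2 - 1) = (a ^ ((1 : ℝ) / 2 - 1 / p)) ^ p := by
    rw [← Real.rpow_mul ha0.le]
    congr 1
    field_simp
  have ht : 0 < a ^ ((1 : ℝ) / 2 - 1 / p) := Real.rpow_pos_of_pos ha0 _
  rw [hpow]
  generalize a ^ ((1 : ℝ) / 2 - 1 / p) = t at h2 ht ⊢
  have hS : 0 ≤ δ1 ^ 2 + δ2 ^ 2 := by positivity
  have hroot : (δ1 ^ 2 + δ2 ^ 2) ^ (p / 2) = (Real.sqrt (δ1 ^ 2 + δ2 ^ 2)) ^ p := by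
    rw [Real.sqrt_eq_rpow, ← Real.rpow_mul hS]
    congr 1
    ring
  have hsqrt : Real.sqrt (δ1 ^ 2 + δ2 ^ 2) ≤ Real.sqrt 2 * δ2 := by
    apply Real.sqrt_le_iff.mpr
    refine ⟨mul_nonneg (Real.sqrt_nonneg 2) (h1.trans h12), ?_⟩
    rw [mul_pow, Real.sq_sqrt zero_le_two]
    nlinarith
  rw [lt_div_iff₀ (by positivity)] at h2
  rw [hroot, ← Real.mul_rpow ht.le (Real.sqrt_nonneg _)]
  refine Real.rpow_lt_rpow (by positivity) ?_ hp
  nlinarith [mul_le_mul_of_nonneg_left hsqrt ht.le]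
end
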